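/- For every λ > 0 define χ_λ(x) := √(2λ)·e^{−λ|x|}. Then for every λ > 0 the function χ_λ lies in H¹(ℝ), has mass ‖χ_λ‖₂² = 2, satisfies D_4(χ_λ) = 0, and is a ground state of D_4 at mass 2. Conversely, every nonnegative ground state u of D_4 at mass 2 equals χ_λ for some λ > 0. -/

import Mathlib

open MeasureTheory Real Set

noncomputable section

/-- `u ∈ H¹(ℝ)` with weak derivative `u'`: `u` is continuous, square-integrable,
`u'` is square-integrable, and `u(b) − u(a) = ∫_a^b u'(t) dt` for all `a ≤ b`. -/
def IsH1 (u u' : ℝ → ℝ) : Prop :=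
  Continuous u ∧ Integrable (fun x => (u x) ^ 2) ∧ Integrable (fun x => (u' x) ^ 2) ∧
    ∀ a b : ℝ, a ≤ b → u b - u a = ∫ t in a..b, u' t

/-- The mass `‖u‖₂² = ∫_ℝ u(x)² dx`. -/
def mass (u : ℝ → ℝ) : ℝ := ∫ x, (u x) ^ 2

/-- `D_q(u) = (1/2)∫ u'² − (1/q)|u(0)|^q`. -/
def Dfun (q : ℝ) (u u' : ℝ → ℝ) : ℝ :=
  (1 / 2) * (∫ x, (u' x) ^ 2) - (1 / q) * |u 0| ^ q

/-- `F_{p,q}(u) = (1/2)∫ u'² − (1/p)∫ |u|^p − (1/q)|u(0)|^q`. -/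
def Ffun (p q : ℝ) (u u' : ℝ → ℝ) : ℝ :=
  (1 / 2) * (∫ x, (u' x) ^ 2) - (1 / p) * (∫ x, |u x| ^ p) - (1 / q) * |u 0| ^ q

/-
For `c > 0` the function `k_c(x) = e^{-c|x|}` satisfies `∫ (u' k_c' + c² u k_c) = 2c u(0)` for every
`u ∈ H¹(ℝ)`: it represents evaluation at `0` for the squared norm `∫ u'² + c² ∫ u²`. Expanding the
squared norm of `u - u(0) k_c` gives `2c u(0)² ≤ ∫ u'² + c² ∫ u²`, with equality iff `u = u(0) k_c`.
Optimizing in `c` yields `u(0)⁴ ≤ ‖u‖² ‖u'‖²`, which at mass `2` says exactly that `D_4(u) ≥ 0`, and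
equality forces `u = u(0) k_c` with `c = u(0)² / 2`, that is `u = ±χ_c`.
-/

open Filter Topology

section Primitive

variable {E : Type*} [NormedAddCommGroup E] [NormedSpace ℝ E] {F f : ℝ → E} {a : ℝ}

theorem integral_Ioi_eq_neg_of_integrableOn_primitive (hF : IntegrableOn F (Ioi a))
    (hf : IntegrableOn f (Ioi a)) (hprim : ∀ b, a ≤ b → ∫ x in a..b, f x = F b - F a) :
    ∫ x in Ioi a, f x = -F a := by
  have hlim : Tendsto F atTop (𝓝 ((∫ x in Ioi a, f x) + F a)) := by
    refine ((intervalIntegral_tendsto_integral_Ioi a hf tendsto_id).add_const (F a)).congr' ?_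
    filter_upwards [eventually_ge_atTop a] with b hb
    rw [id, hprim b hb, sub_add_cancel]
  have hzero : (∫ x in Ioi a, f x) + F a = 0 := by
    refine IntegrableAtFilter.eq_zero_of_tendsto ⟨Ioi a, Ioi_mem_atTop a, hF⟩ (fun s hs => ?_) hlim
    obtain ⟨b, hb⟩ := mem_atTop_sets.1 hs
    exact measure_mono_top hb volume_Ici
  exact eq_neg_of_add_eq_zero_left hzero

theorem integral_Iic_eq_of_integrableOn_primitive (hF : IntegrableOn F (Iic a))
    (hf : IntegrableOn f (Iic a)) (hprim : ∀ b, b ≤ a → ∫ x in b..a, f x = F a - F b) :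
    ∫ x in Iic a, f x = F a := by
  have hlim : Tendsto F atBot (𝓝 (F a - ∫ x in Iic a, f x)) := by
    refine ((intervalIntegral_tendsto_integral_Iic a hf tendsto_id).const_sub (F a)).congr' ?_
    filter_upwards [eventually_le_atBot a] with b hb
    rw [id, hprim b hb, sub_sub_cancel]
  have hzero : F a - ∫ x in Iic a, f x = 0 := by
    refine IntegrableAtFilter.eq_zero_of_tendsto ⟨Iic a, Iic_mem_atBot a, hF⟩ (fun s hs => ?_) hlim
    obtain ⟨b, hb⟩ := mem_atBot_sets.1 hs
    exact measure_mono_top hb volume_Iic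
  exact (sub_eq_zero.1 hzero).symm

end Primitive

section Sign

variable {F f : ℝ → ℝ} {μ : Measure ℝ}

theorem measurable_coe_sign : Measurable fun x : ℝ => (SignType.sign x : ℝ) := by
  have hderiv : deriv (fun x : ℝ => |x|) = fun x => (SignType.sign x : ℝ) := funext deriv_abs
  exact hderiv ▸ measurable_deriv _

theorem abs_coe_sign_le_one (x : ℝ) : |(SignType.sign x : ℝ)| ≤ 1 := by
  rcases lt_trichotomy x 0 with hx | rfl | hx <;> simp [*]

theorem integrable_sign_mul (hf : Integrable f μ) :
    Integrable (fun x => (SignType.sign x : ℝ) * f x) μ :=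
  hf.bdd_mul measurable_coe_sign.aestronglyMeasurable (Eventually.of_forall abs_coe_sign_le_one)

theorem integral_sign_mul (hf : Integrable f) :
    ∫ x, (SignType.sign x : ℝ) * f x = (∫ x in Ioi 0, f x) - ∫ x in Iic 0, f x := by
  have hs := integrable_sign_mul hf
  have hneg : ∫ x in Iic 0, (SignType.sign x : ℝ) * f x = -∫ x in Iic 0, f x := by
    rw [integral_Iic_eq_integral_Iio, integral_Iic_eq_integral_Iio, ← integral_neg]
    exact setIntegral_congr_fun measurableSet_Iio fun x hx => by simp [sign_neg (mem_Iio.1 hx)]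
  have hpos : ∫ x in Ioi 0, (SignType.sign x : ℝ) * f x = ∫ x in Ioi 0, f x :=
    setIntegral_congr_fun measurableSet_Ioi fun x hx => by simp [sign_pos (mem_Ioi.1 hx)]
  rw [← intervalIntegral.integral_Iic_add_Ioi (b := 0) hs.integrableOn hs.integrableOn, hneg, hpos]
  ring

theorem integral_sign_mul_of_primitive (hF : Integrable F) (hf : Integrable f)
    (hprim : ∀ a b, ∫ x in a..b, f x = F b - F a) :
    ∫ x, (SignType.sign x : ℝ) * f x = -2 * F 0 := by
  rw [integral_sign_mul hf,
    integral_Ioi_eq_neg_of_integrableOn_primitive hF.integrableOn hf.integrableOn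
      fun b _ => hprim 0 b,
    integral_Iic_eq_of_integrableOn_primitive hF.integrableOn hf.integrableOn
      fun b _ => hprim b 0]
  ring

end Sign

theorem mass_nonneg (u : ℝ → ℝ) : 0 ≤ mass u := integral_nonneg fun x => sq_nonneg (u x)

theorem mass_eq_zero_of_ae_eq_const {u : ℝ → ℝ} {C : ℝ} (hu : Integrable fun x => u x ^ 2)
    (hC : ∀ᵐ x, u x = C) : mass u = 0 := by
  have hsq : (fun x => u x ^ 2) =ᵐ[volume] fun _ => C ^ 2 := hC.mono fun x hx => by simp only [hx]
  have hC2 : C ^ 2 = 0 := (integrable_const_iff.1 (hu.congr hsq)).resolve_right fun hfin =>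
    hfin.measure_univ_lt_top.ne volume_univ
  rw [mass, integral_congr_ae hsq, hC2, integral_zero]

theorem mass_const_mul (A : ℝ) (u : ℝ → ℝ) : mass (fun x => A * u x) = A ^ 2 * mass u := by
  simp only [mass, mul_pow, integral_const_mul]

theorem Dfun_four (u u' : ℝ → ℝ) :
    Dfun 4 u u' = 1 / 2 * (∫ x, u' x ^ 2) - 1 / 4 * u 0 ^ 4 := by
  rw [Dfun, rpow_ofNat, Even.pow_abs (by decide)]

namespace IsH1

variable {u u' v v' : ℝ → ℝ}

theorem const_mul (h : IsH1 u u') (A : ℝ) : IsH1 (fun x => A * u x) fun x => A * u' x := by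
  obtain ⟨hcont, hu, hu', hftc⟩ := h
  refine ⟨hcont.const_mul A, ?_, ?_, fun a b hab => ?_⟩
  · simpa only [mul_pow] using hu.const_mul (A ^ 2)
  · simpa only [mul_pow] using hu'.const_mul (A ^ 2)
  · rw [intervalIntegral.integral_const_mul, ← hftc a b hab, mul_sub]

/- Where `u'` fails to be integrable, `∫ t in a..b, u' t` takes the junk value `0`, so `IsH1` by
itself only says that `u` is constant there. -/
theorem apply_eq_of_not_integrableAtFilter (h : IsH1 u u') {x a b : ℝ}
    (hx : ¬IntegrableAtFilter u' (𝓝 x)) (ha : a < x) (hb : x < b) : u a = u b := by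
  have hnot : ¬IntervalIntegrable u' volume a b := fun hint =>
    hx ⟨Ioc a b, Ioc_mem_nhds ha hb,
      (intervalIntegrable_iff_integrableOn_Ioc_of_le (ha.trans hb).le).1 hint⟩
  have hdiff := h.2.2.2 a b (ha.trans hb).le
  rw [intervalIntegral.integral_undef hnot] at hdiff
  exact (sub_eq_zero.1 hdiff).symm

theorem locallyIntegrable_deriv (h : IsH1 u u') (hm : mass u ≠ 0) : LocallyIntegrable u' := by
  intro x
  by_contra hx
  have hconst : ∀ y, y ≠ x → u y = u (x + 1) := by
    intro y hy
    rcases hy.lt_or_gt with hlt | hgt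
    · exact h.apply_eq_of_not_integrableAtFilter hx hlt (lt_add_one x)
    · rw [← h.apply_eq_of_not_integrableAtFilter hx (sub_one_lt x) hgt,
        h.apply_eq_of_not_integrableAtFilter hx (sub_one_lt x) (lt_add_one x)]
  exact hm (mass_eq_zero_of_ae_eq_const h.2.1 ((volume.ae_ne x).mono hconst))

theorem integral_deriv_sq_ne_zero (h : IsH1 u u') (hm : mass u ≠ 0) :
    ∫ x, u' x ^ 2 ≠ 0 := by
  intro hE
  have hu' : ∀ᵐ x, u' x = 0 := by
    filter_upwards [(integral_eq_zero_iff_of_nonneg (fun x => sq_nonneg (u' x)) h.2.2.1).1 hE]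
      with x hx using pow_eq_zero_iff two_ne_zero |>.1 hx
  have hdiff : ∀ a b, a ≤ b → u b = u a := by
    intro a b hab
    rw [← sub_eq_zero, h.2.2.2 a b hab]
    exact intervalIntegral.integral_zero_ae (hu'.mono fun x hx _ => hx)
  refine hm (mass_eq_zero_of_ae_eq_const h.2.1 (C := u 0) (Eventually.of_forall fun x => ?_))
  exact (le_total 0 x).elim (hdiff 0 x) fun hx => (hdiff x 0 hx).symm

theorem memLp (h : IsH1 u u') : MemLp u 2 :=
  (memLp_two_iff_integrable_sq h.1.aestronglyMeasurable).2 h.2.1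

theorem memLp_deriv (h : IsH1 u u') (hu : LocallyIntegrable u') : MemLp u' 2 :=
  (memLp_two_iff_integrable_sq hu.aestronglyMeasurable).2 h.2.2.1

theorem eq_add_integral (h : IsH1 u u') (a x : ℝ) : u x = u a + ∫ t in a..x, u' t := by
  rcases le_total a x with hx | hx
  · rw [← h.2.2.2 a x hx, add_sub_cancel]
  · rw [intervalIntegral.integral_symm, ← h.2.2.2 x a hx, neg_sub, add_sub_cancel]

theorem absolutelyContinuousOnInterval (h : IsH1 u u') (hu : LocallyIntegrable u') (a b : ℝ) :
    AbsolutelyContinuousOnInterval u a b := by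
  have hint : IntervalIntegrable u' volume a b :=
    (hu.integrableOn_isCompact isCompact_uIcc).intervalIntegrable
  rw [funext (h.eq_add_integral a)]
  exact (contDiff_const.contDiffOn.absolutelyContinuousOnInterval).fun_add
    (hint.absolutelyContinuousOnInterval_intervalIntegral left_mem_uIcc)

theorem ae_hasDerivAt (h : IsH1 u u') (hu : LocallyIntegrable u') :
    ∀ᵐ x, HasDerivAt u (u' x) x := by
  filter_upwards [_root_.LocallyIntegrable.ae_hasDerivAt_integral hu] with x hx
  rw [funext (h.eq_add_integral 0)]
  exact (hx 0).const_add (u 0)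

theorem integral_deriv_mul_add_mul_deriv (h : IsH1 u u') (hu : LocallyIntegrable u')
    (k : IsH1 v v') (hv : LocallyIntegrable v') (a b : ℝ) :
    ∫ x in a..b, u' x * v x + u x * v' x = u b * v b - u a * v a := by
  rw [← (h.absolutelyContinuousOnInterval hu a b).integral_deriv_mul_eq_sub
    (k.absolutelyContinuousOnInterval hv a b)]
  refine intervalIntegral.integral_congr_ae ?_
  filter_upwards [h.ae_hasDerivAt hu, k.ae_hasDerivAt hv] with x hux hvx _
  rw [hux.deriv, hvx.deriv]

theorem integral_sign_mul_deriv_mul_add_mul_deriv (h : IsH1 u u') (hu : LocallyIntegrable u')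
    (k : IsH1 v v') (hv : LocallyIntegrable v') :
    ∫ x, (SignType.sign x : ℝ) * (u' x * v x + u x * v' x) = -2 * (u 0 * v 0) :=
  integral_sign_mul_of_primitive (F := fun x => u x * v x) (h.memLp.integrable_mul k.memLp)
    (((h.memLp_deriv hu).integrable_mul k.memLp).add (h.memLp.integrable_mul (k.memLp_deriv hv)))
    (h.integral_deriv_mul_add_mul_deriv hu k hv)

end IsH1

/-- The function `e^{-c|x|}`, which is `2c` times the reproducing kernel at `0` of `H¹(ℝ)` for the
squared norm `∫ u'² + c² ∫ u²`. -/
def expKernel (c x : ℝ) : ℝ := exp (-(c * |x|))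

/-- The weak derivative `-c sgn(x) e^{-c|x|}` of `expKernel c`, with the value `0` at the kink. -/
def expKernelDeriv (c x : ℝ) : ℝ := -(c * (SignType.sign x * expKernel c x))

section ExpKernel

variable {c : ℝ}

@[simp]
theorem expKernel_zero_right (c : ℝ) : expKernel c 0 = 1 := by simp [expKernel]

theorem continuous_expKernel (c : ℝ) : Continuous (expKernel c) := by
  unfold expKernel
  fun_prop

theorem hasDerivAt_expKernel (c : ℝ) {x : ℝ} (hx : x ≠ 0) :
    HasDerivAt (expKernel c) (expKernelDeriv c x) x :=
  ((hasDerivAt_abs hx).const_mul c).fun_neg.exp.congr_deriv <| by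
    rw [expKernelDeriv, expKernel]
    ring

theorem locallyIntegrable_expKernelDeriv (c : ℝ) : LocallyIntegrable (expKernelDeriv c) := by
  intro x
  obtain ⟨s, hs, hint⟩ := (continuous_expKernel c).locallyIntegrable (μ := volume) x
  exact ⟨s, hs, ((integrable_sign_mul hint).const_mul c).fun_neg⟩

theorem mass_expKernel (hc : 0 < c) : mass (expKernel c) = 1 / c := by
  have hsq : ∀ x, expKernel c x ^ 2 = exp (-(2 * c) * |x|) := fun x => by
    rw [expKernel, ← exp_nat_mul]
    congr 1
    push_cast
    ring
  simp only [mass, hsq]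
  rw [integral_comp_abs (f := fun x => exp (-(2 * c) * x)), integral_exp_mul_Ioi (by linarith) 0,
    mul_zero, exp_zero]
  field_simp

theorem isH1_expKernel (hc : 0 < c) : IsH1 (expKernel c) (expKernelDeriv c) := by
  have hsq : Integrable fun x => expKernel c x ^ 2 :=
    .of_integral_ne_zero <| (mass_expKernel hc).trans_ne (one_div_pos.2 hc).ne'
  refine ⟨continuous_expKernel c, hsq, ?_, fun a b hab => ?_⟩
  · refine (integrable_sign_mul (integrable_sign_mul (hsq.const_mul (c ^ 2)))).congr
      (Eventually.of_forall fun x => ?_)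
    simp only [expKernelDeriv]
    ring
  · exact (integral_eq_of_hasDerivAt_off_countable_of_le _ _ hab (countable_singleton 0)
      (continuous_expKernel c).continuousOn (fun x hx => hasDerivAt_expKernel c hx.2)
      ((locallyIntegrable_expKernelDeriv c).integrableOn_isCompact
        isCompact_uIcc).intervalIntegrable).symm

end ExpKernel

namespace IsH1

variable {u u' : ℝ → ℝ} {c : ℝ}

theorem integrable_deriv_mul_expKernelDeriv_add (h : IsH1 u u') (hu : LocallyIntegrable u')
    (hc : 0 < c) :
    Integrable fun x => u' x * expKernelDeriv c x + c ^ 2 * (u x * expKernel c x) :=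
  ((h.memLp_deriv hu).integrable_mul
    ((isH1_expKernel hc).memLp_deriv (locallyIntegrable_expKernelDeriv c))).add
    ((h.memLp.integrable_mul (isH1_expKernel hc).memLp).const_mul (c ^ 2))

theorem integral_deriv_mul_expKernelDeriv_add (h : IsH1 u u') (hu : LocallyIntegrable u')
    (hc : 0 < c) :
    ∫ x, (u' x * expKernelDeriv c x + c ^ 2 * (u x * expKernel c x)) = 2 * c * u 0 := by
  have hsign : ∀ᵐ x, u' x * expKernelDeriv c x + c ^ 2 * (u x * expKernel c x) =
      -c * (SignType.sign x * (u' x * expKernel c x + u x * expKernelDeriv c x)) := by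
    filter_upwards [volume.ae_ne 0] with x hx
    have hsq : (SignType.sign x : ℝ) * SignType.sign x = 1 := by
      rcases hx.lt_or_gt with hneg | hpos <;> simp [*]
    rw [expKernelDeriv]
    linear_combination -c ^ 2 * u x * expKernel c x * hsq
  rw [integral_congr_ae hsign, integral_const_mul,
    h.integral_sign_mul_deriv_mul_add_mul_deriv hu (isH1_expKernel hc)
      (locallyIntegrable_expKernelDeriv c), expKernel_zero_right]
  ring

theorem integrable_sq_add_sq_sub_expKernel (h : IsH1 u u') (hu : LocallyIntegrable u')
    (hc : 0 < c) (A : ℝ) :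
    Integrable fun x =>
      (u' x - A * expKernelDeriv c x) ^ 2 + c ^ 2 * (u x - A * expKernel c x) ^ 2 := by
  have k := isH1_expKernel hc
  have hk := locallyIntegrable_expKernelDeriv c
  exact ((h.memLp_deriv hu).sub ((k.memLp_deriv hk).const_mul A)).integrable_sq.add
    ((h.memLp.sub (k.memLp.const_mul A)).integrable_sq.const_mul (c ^ 2))

theorem integral_sq_add_sq_sub_expKernel (h : IsH1 u u') (hu : LocallyIntegrable u')
    (hc : 0 < c) :
    ∫ x, ((u' x - u 0 * expKernelDeriv c x) ^ 2 + c ^ 2 * (u x - u 0 * expKernel c x) ^ 2) =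
      (∫ x, u' x ^ 2) + c ^ 2 * mass u - 2 * c * u 0 ^ 2 := by
  have k := isH1_expKernel hc
  have hk := locallyIntegrable_expKernelDeriv c
  have huu : Integrable fun x => u' x ^ 2 + c ^ 2 * u x ^ 2 := h.2.2.1.add (h.2.1.const_mul _)
  have huk := (h.integrable_deriv_mul_expKernelDeriv_add hu hc).const_mul (2 * u 0)
  have hsub : Integrable fun x => u' x ^ 2 + c ^ 2 * u x ^ 2
      - 2 * u 0 * (u' x * expKernelDeriv c x + c ^ 2 * (u x * expKernel c x)) := huu.sub huk
  have hkk := (k.integrable_deriv_mul_expKernelDeriv_add hk hc).const_mul (u 0 ^ 2)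
  calc
    _ = ∫ x, (u' x ^ 2 + c ^ 2 * u x ^ 2
          - 2 * u 0 * (u' x * expKernelDeriv c x + c ^ 2 * (u x * expKernel c x))
          + u 0 ^ 2 * (expKernelDeriv c x * expKernelDeriv c x
            + c ^ 2 * (expKernel c x * expKernel c x))) := by
      congr with x
      ring
    _ = (∫ x, u' x ^ 2) + c ^ 2 * mass u - 2 * u 0 * (2 * c * u 0)
          + u 0 ^ 2 * (2 * c * expKernel c 0) := by
      rw [integral_add hsub hkk, integral_sub huu huk,
        integral_add h.2.2.1 (h.2.1.const_mul _), integral_const_mul, integral_const_mul,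
        integral_const_mul, h.integral_deriv_mul_expKernelDeriv_add hu hc,
        k.integral_deriv_mul_expKernelDeriv_add hk hc, mass]
    _ = _ := by
      rw [expKernel_zero_right]
      ring

theorem two_mul_apply_zero_sq_le (h : IsH1 u u') (hu : LocallyIntegrable u') (hc : 0 < c) :
    2 * c * u 0 ^ 2 ≤ (∫ x, u' x ^ 2) + c ^ 2 * mass u := by
  rw [← sub_nonneg, ← h.integral_sq_add_sq_sub_expKernel hu hc]
  exact integral_nonneg fun x => by positivity

theorem eq_expKernel_of_two_mul_apply_zero_sq_eq (h : IsH1 u u') (hu : LocallyIntegrable u')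
    (hc : 0 < c) (heq : 2 * c * u 0 ^ 2 = (∫ x, u' x ^ 2) + c ^ 2 * mass u) :
    u = fun x => u 0 * expKernel c x := by
  have hzero := h.integral_sq_add_sq_sub_expKernel hu hc
  rw [← heq, sub_self, integral_eq_zero_iff_of_nonneg (fun x => by positivity)
    (h.integrable_sq_add_sq_sub_expKernel hu hc (u 0))] at hzero
  refine (h.1.ae_eq_iff_eq volume ((continuous_expKernel c).const_mul (u 0))).1 ?_
  filter_upwards [hzero] with x hx
  have hsq : c ^ 2 * (u x - u 0 * expKernel c x) ^ 2 = 0 :=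
    ((add_eq_zero_iff_of_nonneg (sq_nonneg _) (by positivity)).1 hx).2
  simpa [hc.ne', sub_eq_zero] using hsq

theorem apply_zero_pow_four_le (h : IsH1 u u') (hu : LocallyIntegrable u') :
    u 0 ^ 4 ≤ mass u * ∫ x, u' x ^ 2 := by
  have hE : 0 ≤ ∫ x, u' x ^ 2 := integral_nonneg fun x => sq_nonneg _
  have hquad : ∀ c : ℝ, 0 ≤ mass u * (c * c) + -2 * u 0 ^ 2 * c + ∫ x, u' x ^ 2 := by
    intro c
    rcases le_or_gt c 0 with hc | hc
    · nlinarith [mul_nonneg (neg_nonneg.2 hc) (sq_nonneg (u 0)),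
        mul_nonneg (mass_nonneg u) (mul_self_nonneg c)]
    · linarith [h.two_mul_apply_zero_sq_le hu hc]
  have hdiscrim := discrim_le_zero hquad
  rw [discrim] at hdiscrim
  linarith

theorem eq_expKernel_of_apply_zero_pow_four_eq (h : IsH1 u u') (hm : mass u ≠ 0)
    (heq : u 0 ^ 4 = mass u * ∫ x, u' x ^ 2) :
    u 0 ≠ 0 ∧ u = fun x => u 0 * expKernel (u 0 ^ 2 / mass u) x := by
  have hpos : 0 < mass u := (mass_nonneg u).lt_of_ne' hm
  have h0 : u 0 ≠ 0 := fun h0 =>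
    mul_ne_zero hm (h.integral_deriv_sq_ne_zero hm) (by rw [← heq, h0]; norm_num)
  refine ⟨h0, h.eq_expKernel_of_two_mul_apply_zero_sq_eq (h.locallyIntegrable_deriv hm)
    (by positivity) ?_⟩
  field_simp
  linarith

theorem Dfun_four_nonneg (h : IsH1 u u') (hu : LocallyIntegrable u') (hm : mass u ≤ 2) :
    0 ≤ Dfun 4 u u' := by
  have hE : 0 ≤ ∫ x, u' x ^ 2 := integral_nonneg fun x => sq_nonneg _
  rw [Dfun_four]
  nlinarith [h.apply_zero_pow_four_le hu, mul_le_mul_of_nonneg_right hm hE]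

end IsH1

theorem integral_expKernelDeriv_sq {c : ℝ} (hc : 0 < c) : ∫ x, expKernelDeriv c x ^ 2 = c := by
  have hsq := (isH1_expKernel hc).integral_sq_add_sq_sub_expKernel
    (locallyIntegrable_expKernelDeriv c) hc
  simp only [expKernel_zero_right, one_mul, sub_self, ne_eq, OfNat.ofNat_ne_zero,
    not_false_eq_true, zero_pow, mul_zero, add_zero, integral_zero, mass_expKernel hc] at hsq
  field_simp at hsq
  linarith

/-- The function `χ_λ`, the multiple of `expKernel lam` of mass `2`; these are the ground states of
`D_4` at mass `2`, up to sign. -/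
def profile (lam x : ℝ) : ℝ := √(2 * lam) * expKernel lam x

/-- The weak derivative of `profile lam`, with the value `0` at the kink. -/
def profileDeriv (lam x : ℝ) : ℝ := √(2 * lam) * expKernelDeriv lam x

section Profile

variable {lam : ℝ}

theorem isH1_profile (hlam : 0 < lam) : IsH1 (profile lam) (profileDeriv lam) :=
  (isH1_expKernel hlam).const_mul _

theorem mass_profile (hlam : 0 < lam) : mass (profile lam) = 2 := by
  unfold profile
  rw [mass_const_mul, mass_expKernel hlam, sq_sqrt (by positivity)]
  field_simp

theorem Dfun_four_profile (hlam : 0 < lam) : Dfun 4 (profile lam) (profileDeriv lam) = 0 := by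
  have hsqrt : √(2 * lam) ^ 2 = 2 * lam := sq_sqrt (by positivity)
  have hE : ∫ x, profileDeriv lam x ^ 2 = 2 * lam ^ 2 := by
    simp only [profileDeriv, mul_pow, integral_const_mul, integral_expKernelDeriv_sq hlam, hsqrt]
    ring
  have h0 : profile lam 0 ^ 4 = 4 * lam ^ 2 := by
    rw [profile, expKernel_zero_right, mul_one, pow_mul _ 2 2, hsqrt]
    ring
  rw [Dfun_four, hE, h0]
  ring

theorem profile_pos (hlam : 0 < lam) (x : ℝ) : 0 < profile lam x :=
  mul_pos (sqrt_pos.2 (by positivity)) (exp_pos _)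

end Profile

theorem IsH1.eq_profile_or_eq_neg_profile {u u' : ℝ → ℝ} (h : IsH1 u u') (hm : mass u = 2)
    (hD : Dfun 4 u u' = 0) : ∃ lam, 0 < lam ∧ (u = profile lam ∨ u = -profile lam) := by
  rw [Dfun_four] at hD
  obtain ⟨h0, hu⟩ := h.eq_expKernel_of_apply_zero_pow_four_eq (hm.trans_ne two_ne_zero)
    (by rw [hm]; linarith)
  rw [hm] at hu
  have hsqrt : √(2 * (u 0 ^ 2 / 2)) = |u 0| := by
    rw [mul_div_cancel₀ _ two_ne_zero, sqrt_sq_eq_abs]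
  refine ⟨u 0 ^ 2 / 2, by positivity, ?_⟩
  rcases abs_choice (u 0) with habs | habs
  · exact .inl <| hu.trans <| funext fun x => by rw [profile, hsqrt, habs]
  · exact .inr <| hu.trans <| funext fun x => by
      rw [Pi.neg_apply, profile, hsqrt, habs, neg_mul, neg_neg]

theorem stmt4_general :
    (∀ lam : ℝ, 0 < lam → ∃ χ' : ℝ → ℝ,
      IsH1 (profile lam) χ' ∧ mass (profile lam) = 2 ∧ Dfun 4 (profile lam) χ' = 0 ∧
      ∀ v v' : ℝ → ℝ, IsH1 v v' → mass v = 2 → Dfun 4 (profile lam) χ' ≤ Dfun 4 v v') ∧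
    ∀ u u' : ℝ → ℝ, IsH1 u u' → mass u = 2 →
      (∀ v v' : ℝ → ℝ, IsH1 v v' → mass v = 2 → Dfun 4 u u' ≤ Dfun 4 v v') →
      ∃ lam : ℝ, 0 < lam ∧ (u = profile lam ∨ u = -profile lam) := by
  have hnonneg : ∀ v v' : ℝ → ℝ, IsH1 v v' → mass v = 2 → 0 ≤ Dfun 4 v v' := fun v v' hv hm =>
    hv.Dfun_four_nonneg (hv.locallyIntegrable_deriv (hm.trans_ne two_ne_zero)) hm.le
  refine ⟨fun lam hlam => ⟨profileDeriv lam, isH1_profile hlam, mass_profile hlam,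
    Dfun_four_profile hlam, ?_⟩, fun u u' hu hm hmin => ?_⟩
  · rw [Dfun_four_profile hlam]
    exact hnonneg
  · have hle : Dfun 4 u u' ≤ 0 := (hmin _ _ (isH1_profile one_pos) (mass_profile one_pos)).trans_eq
      (Dfun_four_profile one_pos)
    exact hu.eq_profile_or_eq_neg_profile hm (hle.antisymm (hnonneg u u' hu hm))

theorem stmt4 :
    (∀ lam : ℝ, 0 < lam → ∃ χ' : ℝ → ℝ,
      IsH1 (fun x => Real.sqrt (2 * lam) * Real.exp (-(lam * |x|))) χ' ∧
      mass (fun x => Real.sqrt (2 * lam) * Real.exp (-(lam * |x|))) = 2 ∧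
      Dfun 4 (fun x => Real.sqrt (2 * lam) * Real.exp (-(lam * |x|))) χ' = 0 ∧
      (∀ v v' : ℝ → ℝ, IsH1 v v' → mass v = 2 →
        Dfun 4 (fun x => Real.sqrt (2 * lam) * Real.exp (-(lam * |x|))) χ' ≤ Dfun 4 v v')) ∧
    (∀ u u' : ℝ → ℝ, IsH1 u u' → (∀ x, 0 ≤ u x) → mass u = 2 →
      (∀ v v' : ℝ → ℝ, IsH1 v v' → mass v = 2 → Dfun 4 u u' ≤ Dfun 4 v v') →
      ∃ lam : ℝ, 0 < lam ∧ u = fun x => Real.sqrt (2 * lam) * Real.exp (-(lam * |x|))) := by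
  refine ⟨stmt4_general.1, fun u u' hu hpos hm hmin => ?_⟩
  obtain ⟨lam, hlam, h | rfl⟩ := stmt4_general.2 u u' hu hm hmin
  · exact ⟨lam, hlam, h⟩
  · exact absurd (hpos 0) (neg_neg_of_pos (profile_pos hlam 0)).not_ge
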